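/- Let X be a measurable space, Y ⊆ ℝ closed, P a probability measure on X × Y with marginal P^X, and L : Y × ℝ → [0,∞) a measurable loss function that is Lipschitz continuous with constant |L|₁. Then for all measurable f, g : X → ℝ with ∫|f| dP^X < ∞ and ∫|g| dP^X < ∞, the shifted risks are finite and |R_{L⋆,P}(f) − R_{L⋆,P}(g)| ≤ |L|₁·∫ |f − g| dP^X. -/

import Mathlib

open MeasureTheory

/-!
Shifting by `L(y, 0)` leaves differences of `L(y, ·)` unchanged, so `L⋆(y, ·)` is Lipschitz with the
same constant as `L(y, ·)` and in addition vanishes at `0`. Hence `|L⋆(y, f x)| ≤ |L|₁ |f x|`, which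
makes `L⋆(y, f x)` integrable even when `L(y, f x)` itself is not, and
`|L⋆(y, f x) - L⋆(y, g x)| ≤ |L|₁ |f x - g x|` integrates to the bound on the risks.
-/

open scoped NNReal

section LipschitzSuperposition

variable {Ω E F : Type*} [MeasurableSpace Ω] [NormedAddCommGroup E] [NormedAddCommGroup F]
  {μ : Measure Ω} {φ : Ω → E → F} {K : ℝ≥0} {u v : Ω → E}

theorem integrable_superposition_of_lipschitzWith
    (hφ : ∀ᵐ ω ∂μ, LipschitzWith K (φ ω)) (hφ_zero : ∀ᵐ ω ∂μ, φ ω 0 = 0)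
    (hφu : AEStronglyMeasurable (fun ω => φ ω (u ω)) μ) (hu : Integrable u μ) :
    Integrable (fun ω => φ ω (u ω)) μ := by
  refine (hu.norm.const_mul (K : ℝ)).mono' hφu ?_
  filter_upwards [hφ, hφ_zero] with ω hLip hzero
  simpa only [hzero, sub_zero] using hLip.norm_sub_le (u ω) 0

theorem norm_integral_superposition_sub_le_of_lipschitzWith [NormedSpace ℝ F]
    (hφ : ∀ᵐ ω ∂μ, LipschitzWith K (φ ω))
    (hφu : Integrable (fun ω => φ ω (u ω)) μ) (hφv : Integrable (fun ω => φ ω (v ω)) μ)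
    (huv : Integrable (fun ω => u ω - v ω) μ) :
    ‖(∫ ω, φ ω (u ω) ∂μ) - ∫ ω, φ ω (v ω) ∂μ‖ ≤ K * ∫ ω, ‖u ω - v ω‖ ∂μ := by
  rw [← integral_sub hφu hφv, ← integral_const_mul]
  refine norm_integral_le_of_norm_le (huv.norm.const_mul (K : ℝ)) ?_
  filter_upwards [hφ] with ω hLip
  exact hLip.norm_sub_le (u ω) (v ω)

end LipschitzSuperposition

section ShiftedLoss

variable {𝒴 E : Type*}

/-- The shifted loss `L⋆(y, t) = L(y, t) - L(y, 0)`, for labels `y` in an arbitrary type and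
predictions `t` in any type with a zero. -/
def shiftedLoss [Zero E] (L : 𝒴 → E → ℝ) (y : 𝒴) (t : E) : ℝ :=
  L y t - L y 0

theorem shiftedLoss_zero [Zero E] (L : 𝒴 → E → ℝ) (y : 𝒴) : shiftedLoss L y 0 = 0 :=
  sub_self _

theorem lipschitzWith_shiftedLoss [PseudoMetricSpace E] [Zero E] {L : 𝒴 → E → ℝ} {y : 𝒴}
    {C : ℝ≥0} (hL : LipschitzWith C (L y)) : LipschitzWith C (shiftedLoss L y) :=
  LipschitzWith.of_dist_le_mul fun t s => by
    simpa only [shiftedLoss, dist_sub_right] using hL.dist_le_mul t s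

theorem measurable_uncurry_shiftedLoss [Zero E] [MeasurableSpace 𝒴] [MeasurableSpace E]
    {L : 𝒴 → E → ℝ} (hL : Measurable (Function.uncurry L)) :
    Measurable (Function.uncurry (shiftedLoss L)) :=
  hL.sub (hL.comp (measurable_fst.prodMk measurable_const))

end ShiftedLoss

section ShiftedRisk

variable {X 𝒴 E : Type*} [MeasurableSpace X] [MeasurableSpace 𝒴]

/-- The shifted risk `R_{L⋆,P}(f) = ∫ L⋆(y, f x) dP(x, y)` of a predictor `f`. It is a Bochner
integral, hence `0` by convention when the shifted loss of `f` is not `P`-integrable. -/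
noncomputable def shiftedRisk [Zero E] (L : 𝒴 → E → ℝ) (P : Measure (X × 𝒴)) (f : X → E) : ℝ :=
  ∫ p, shiftedLoss L p.2 (f p.1) ∂P

variable [NormedAddCommGroup E] {P : Measure (X × 𝒴)} {L : 𝒴 → E → ℝ} {C : ℝ≥0} {f g : X → E}

theorem integrable_shiftedLoss [MeasurableSpace E] [BorelSpace E]
    (hL : Measurable (Function.uncurry L)) (hLip : ∀ᵐ p ∂P, LipschitzWith C (L p.2))
    (hf : Integrable f P.fst) :
    Integrable (fun p => shiftedLoss L p.2 (f p.1)) P := by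
  have hf_fst : Integrable (fun p : X × 𝒴 => f p.1) P := hf.comp_measurable measurable_fst
  have hmeas : AEMeasurable (fun p => shiftedLoss L p.2 (f p.1)) P :=
    (measurable_uncurry_shiftedLoss hL).comp_aemeasurable
      (measurable_snd.aemeasurable.prodMk hf_fst.aemeasurable)
  exact integrable_superposition_of_lipschitzWith
    (hLip.mono fun _ => lipschitzWith_shiftedLoss)
    (.of_forall fun p => shiftedLoss_zero L p.2) hmeas.aestronglyMeasurable hf_fst

theorem abs_shiftedRisk_sub_le (hLip : ∀ᵐ p ∂P, LipschitzWith C (L p.2))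
    (hLf : Integrable (fun p => shiftedLoss L p.2 (f p.1)) P)
    (hLg : Integrable (fun p => shiftedLoss L p.2 (g p.1)) P)
    (hfg : Integrable (fun x => f x - g x) P.fst) :
    |shiftedRisk L P f - shiftedRisk L P g| ≤ C * ∫ x, ‖f x - g x‖ ∂P.fst := by
  have hmarginal : ∫ x, ‖f x - g x‖ ∂P.fst = ∫ p, ‖f p.1 - g p.1‖ ∂P :=
    integral_map measurable_fst.aemeasurable hfg.norm.aestronglyMeasurable
  rw [hmarginal]
  exact norm_integral_superposition_sub_le_of_lipschitzWith
    (hLip.mono fun _ => lipschitzWith_shiftedLoss) hLf hLg (hfg.comp_measurable measurable_fst)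

theorem stmt9_general [MeasurableSpace E] [BorelSpace E]
    (hL : Measurable (Function.uncurry L)) (hLip : ∀ᵐ p ∂P, LipschitzWith C (L p.2))
    (hf : Integrable f P.fst) (hg : Integrable g P.fst) :
    Integrable (fun p => shiftedLoss L p.2 (f p.1)) P ∧
    Integrable (fun p => shiftedLoss L p.2 (g p.1)) P ∧
    |shiftedRisk L P f - shiftedRisk L P g| ≤ C * ∫ x, ‖f x - g x‖ ∂P.fst :=
  have hLf := integrable_shiftedLoss hL hLip hf
  have hLg := integrable_shiftedLoss hL hLip hg
  ⟨hLf, hLg, abs_shiftedRisk_sub_le hLip hLf hLg (hf.sub hg)⟩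

end ShiftedRisk

/-- For a Lipschitz continuous loss `L` (constant `C = |L|₁`) and measurable
`f, g : X → ℝ` that are `P^X`-integrable, the shifted risks are finite (the shifted losses are
`P`-integrable) and `|R_{L⋆,P}(f) - R_{L⋆,P}(g)| ≤ C·∫|f - g| dP^X`. -/
theorem stmt9 {X : Type*} [MeasurableSpace X]
    (Y : Set ℝ) (hY : IsClosed Y)
    (P : Measure (X × ℝ)) [IsProbabilityMeasure P]
    (hPY : ∀ᵐ p ∂P, p.2 ∈ Y)
    (L : ℝ → ℝ → ℝ)
    (hLmeas : Measurable (Function.uncurry L))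
    (hLnonneg : ∀ y ∈ Y, ∀ t : ℝ, 0 ≤ L y t)
    (C : ℝ) (hC : 0 ≤ C)
    (hLip : ∀ y ∈ Y, ∀ s t : ℝ, |L y t - L y s| ≤ C * |t - s|)
    (f g : X → ℝ) (hf : Measurable f) (hg : Measurable g)
    (hfint : Integrable f (P.map Prod.fst))
    (hgint : Integrable g (P.map Prod.fst)) :
    Integrable (fun p : X × ℝ => L p.2 (f p.1) - L p.2 0) P ∧
    Integrable (fun p : X × ℝ => L p.2 (g p.1) - L p.2 0) P ∧
    |(∫ p : X × ℝ, (L p.2 (f p.1) - L p.2 0) ∂P) -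
        ∫ p : X × ℝ, (L p.2 (g p.1) - L p.2 0) ∂P| ≤
      C * ∫ x, |f x - g x| ∂(P.map Prod.fst) := by
  have hLip_ae : ∀ᵐ p ∂P, LipschitzWith ⟨C, hC⟩ (L p.2) :=
    hPY.mono fun p hp => LipschitzWith.of_dist_le_mul fun t s => hLip p.2 hp s t
  exact stmt9_general hLmeas hLip_ae hfint hgint
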